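/- arXiv:2012.06901 — 4 statements merged into one kernel-verified Lean document; each statement's English description precedes it below -/
import Mathlib

section
/- Let π_p, C, n_p, n_u be real numbers with 0 < π_p < 1, C > 0, n_p > 0, n_u > 0, and (√C + 1)·π_p < 1. Then the inequality π_p/√n_p + 1/√n_u ≤ (1 − π_p)/√(C·n_p) holds if and only if n_u ≥ C·n_p/(1 − (√C + 1)·π_p)². (This is the condition under which the estimation error bound of PU learning, with n_p positive and n_u unlabeled samples, is tighter than that of PN learning with n_n = C·n_p negative samples, i.e., the condition π_p/√n_p + 1/√n_u ≤ (1 − π_p)/√n_n.) -/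
open Real

theorem pu_sampling_bound (πp C np nu : ℝ)
    (hπ0 : 0 < πp) (hπ1 : πp < 1) (hC : 0 < C) (hnp : 0 < np) (hnu : 0 < nu)
    (hcond : (Real.sqrt C + 1) * πp < 1) :
    πp / Real.sqrt np + 1 / Real.sqrt nu ≤ (1 - πp) / Real.sqrt (C * np) ↔
      nu ≥ C * np / (1 - (Real.sqrt C + 1) * πp) ^ 2 := by
  have hc := Real.sqrt_pos.2 hC
  have ha := Real.sqrt_pos.2 hnp
  have hb := Real.sqrt_pos.2 hnu
  have hc2 := Real.sq_sqrt hC.le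
  have ha2 := Real.sq_sqrt hnp.le
  have hb2 := Real.sq_sqrt hnu.le
  rw [Real.sqrt_mul hC.le]
  generalize Real.sqrt C = c at *
  generalize Real.sqrt np = a at *
  generalize Real.sqrt nu = b at *
  subst hc2 ha2 hb2
  have hd : 0 < 1 - (c + 1) * πp := by linarith
  have key : (1 - πp) / (c * a) - (πp / a + 1 / b)
      = (b * (1 - (c + 1) * πp) - c * a) / (c * a * b) := by
    field_simp
    ring
  have hR : b ^ 2 ≥ c ^ 2 * a ^ 2 / (1 - (c + 1) * πp) ^ 2 ↔
      c * a ≤ b * (1 - (c + 1) * πp) := by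
    rw [ge_iff_le, div_le_iff₀ (by positivity), ← mul_pow, ← mul_pow]
    exact pow_le_pow_iff_left₀ (by positivity) (by positivity) two_ne_zero
  rw [hR, ← sub_nonneg, key, le_div_iff₀ (by positivity), zero_mul, sub_nonneg]
end

section
/- Let (X, μ) be a measure space and fix a positive class prior π_p ∈ (0,1). Let p_p, p_n, p_g : X → ℝ be nonnegative measurable functions with ∫ p_p dμ = ∫ p_n dμ = ∫ p_g dμ = 1 and with, for μ-a.e. x, p_p(x) > 0 and (1 − π_p)·p_n(x) + p_g(x) > 0. Define p_u := π_p·p_p + (1 − π_p)·p_n and D*(x) := π_p·p_p(x)/(p_u(x) + p_g(x)). Assume the functions x ↦ p_p(x)·log(p_p(x)/((p_u(x)+p_g(x))/2)) and x ↦ (((1 − π_p)·p_n(x) + p_g(x))/(2 − π_p))·log((((1 − π_p)·p_n(x) + p_g(x))/(2 − π_p))/((p_u(x)+p_g(x))/2)) are μ-integrable. Then V(D*) = −2·H(π_p/2) + π_p·KL(p_p ‖ (p_u + p_g)/2) + (2 − π_p)·KL(((1 − π_p)·p_n + p_g)/(2 − π_p) ‖ (p_u + p_g)/2), where V(D*)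 := ∫_X [π_p·p_p(x)·log(D*(x)) + ((1 − π_p)·p_n(x) + p_g(x))·log(1 − D*(x))] dμ(x) and KL(f ‖ g) := ∫_X f(x)·log(f(x)/g(x)) dμ(x). (Optimality of the generator: with the optimal discriminator fixed, the generator objective equals this KL decomposition.) -/
open MeasureTheory Real

theorem optimal_generator_kl_decomposition {X : Type*} [MeasurableSpace X] (μ : Measure X)
    (πp : ℝ) (hπ0 : 0 < πp) (hπ1 : πp < 1)
    (pp pn pg : X → ℝ)
    (hppm : Measurable pp) (hpnm : Measurable pn) (hpgm : Measurable pg)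
    (hpp0 : ∀ x, 0 ≤ pp x) (hpn0 : ∀ x, 0 ≤ pn x) (hpg0 : ∀ x, 0 ≤ pg x)
    (hppint : ∫ x, pp x ∂μ = 1) (hpnint : ∫ x, pn x ∂μ = 1) (hpgint : ∫ x, pg x ∂μ = 1)
    (hae : ∀ᵐ x ∂μ, 0 < pp x ∧ 0 < (1 - πp) * pn x + pg x)
    (pu : X → ℝ) (hpu : pu = fun x => πp * pp x + (1 - πp) * pn x)
    (Dstar : X → ℝ) (hDstar : Dstar = fun x => πp * pp x / (pu x + pg x))
    (hint1 : Integrable (fun x =>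
      pp x * Real.log (pp x / ((pu x + pg x) / 2))) μ)
    (hint2 : Integrable (fun x =>
      (((1 - πp) * pn x + pg x) / (2 - πp)) *
        Real.log ((((1 - πp) * pn x + pg x) / (2 - πp)) / ((pu x + pg x) / 2))) μ) :
    ∫ x, (πp * pp x * Real.log (Dstar x) +
        ((1 - πp) * pn x + pg x) * Real.log (1 - Dstar x)) ∂μ =
      -2 * Real.binEntropy (πp / 2) +
        πp * ∫ x, pp x * Real.log (pp x / ((pu x + pg x) / 2)) ∂μ +
        (2 - πp) * ∫ x, (((1 - πp) * pn x + pg x) / (2 - πp)) *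
          Real.log ((((1 - πp) * pn x + pg x) / (2 - πp)) / ((pu x + pg x) / 2)) ∂μ := by
  have ip : Integrable pp μ := by
    by_contra h
    rw [integral_undef h] at hppint
    norm_num at hppint
  have inn : Integrable pn μ := by
    by_contra h
    rw [integral_undef h] at hpnint
    norm_num at hpnint
  have ig : Integrable pg μ := by
    by_contra h
    rw [integral_undef h] at hpgint
    norm_num at hpgint
  have hπ2 : (0:ℝ) < 2 - πp := by linarith
  have iq : Integrable (fun x => (1 - πp) * pn x + pg x) μ := (inn.const_mul _).add ig
  have hq : ∫ x, ((1 - πp) * pn x + pg x) ∂μ = 2 - πp := by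
    rw [integral_add (inn.const_mul _) ig, integral_const_mul, hpnint, hpgint]
    ring
  have key : ∀ᵐ x ∂μ, (πp * pp x * Real.log (Dstar x) +
        ((1 - πp) * pn x + pg x) * Real.log (1 - Dstar x)) =
      (πp * (pp x * Real.log (pp x / ((pu x + pg x) / 2))) +
        (2 - πp) * ((((1 - πp) * pn x + pg x) / (2 - πp)) *
          Real.log ((((1 - πp) * pn x + pg x) / (2 - πp)) / ((pu x + pg x) / 2)))) +
      ((πp * Real.log (πp / 2)) * pp x +
        Real.log (1 - πp / 2) * ((1 - πp) * pn x + pg x)) := by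
    filter_upwards [hae] with x hx
    obtain ⟨ha, hb⟩ := hx
    have hS : pu x + pg x = πp * pp x + ((1 - πp) * pn x + pg x) := by
      rw [hpu]; ring
    have hD : Dstar x = πp * pp x / (pu x + pg x) := by rw [hDstar]
    rw [hD, hS]
    generalize (1 - πp) * pn x + pg x = q at *
    generalize pp x = a at *
    have hT : 0 < πp * a + q := by positivity
    have e1 : πp * a / (πp * a + q) = (πp / 2) * (a / ((πp * a + q) / 2)) := by
      field_simp
    have e2 : 1 - πp * a / (πp * a + q) =
        (1 - πp / 2) * (q / (2 - πp) / ((πp * a + q) / 2)) := by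
      field_simp
      ring
    have h1 : (1 - πp / 2) ≠ 0 := by linarith
    rw [e2, e1, Real.log_mul (by positivity) (by positivity), Real.log_mul h1 (by positivity)]
    have e3 : ∀ L : ℝ, (2 - πp) * (q / (2 - πp) * L) = q * L := by
      intro L
      field_simp
    rw [e3]
    ring
  rw [integral_congr_ae key, integral_add, integral_add (hint1.const_mul _) (hint2.const_mul _),
    integral_add (ip.const_mul _) (iq.const_mul _), integral_const_mul, integral_const_mul,
    integral_const_mul, integral_const_mul, hppint, hq,
    Real.binEntropy_eq_negMulLog_add_negMulLog_one_sub, Real.negMulLog, Real.negMulLog]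
  · ring
  · exact (hint1.const_mul _).add (hint2.const_mul _)
  · exact (ip.const_mul _).add (iq.const_mul _)
end

section
/- Let (X, μ) be a measure space and fix a positive class prior π_p ∈ (0,1). Let p_p, p_n, p_g : X → ℝ be nonnegative measurable functions with ∫ p_p dμ = ∫ p_n dμ = ∫ p_g dμ = 1 and with, for μ-a.e. x, p_p(x) > 0 and (1 − π_p)·p_n(x) + p_g(x) > 0. Define p_u := π_p·p_p + (1 − π_p)·p_n and D*(x) := π_p·p_p(x)/(p_u(x) + p_g(x)). Assume the functions x ↦ p_p(x)·log(p_p(x)/((p_u(x)+p_g(x))/2)) and x ↦ (((1 − π_p)·p_n(x) + p_g(x))/(2 − π_p))·log((((1 − π_p)·p_n(x) + p_g(x))/(2 − π_p))/((p_u(x)+p_g(x))/2)) are μ-integrable. Then V(D*) ≥ −2·H(π_p/2), where V(D*) := ∫_X [π_p·p_p(x)·log(D*(x)) + ((1 − π_p)·p_n(x) + p_g(x))·log(1 − D*(x))] dμ(x). (The value of the minimax objective at the optimal discriminator is bounded below by −2·H(π_p/2).) -/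
open MeasureTheory Real

lemma aux_tangent (a s c : ℝ) (ha : 0 < a) (hs : 0 < s) (hc : 0 < c) :
    a * Real.log c + (a - s * c) ≤ a * Real.log (a / s) := by
  have h := Real.one_sub_inv_le_log_of_pos (x := a / (s * c)) (by positivity)
  have e : Real.log (a / (s * c)) = Real.log (a / s) - Real.log c := by
    rw [← div_div, Real.log_div (by positivity) (by positivity)]
  rw [e] at h
  have h2 := mul_le_mul_of_nonneg_left h ha.le
  have h3 : a * (1 - (a / (s * c))⁻¹) = a - s * c := by field_simp
  rw [h3] at h2
  linarith

theorem minimax_value_lower_bound {X : Type*} [MeasurableSpace X] (μ : Measure X)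
    (πp : ℝ) (hπ0 : 0 < πp) (hπ1 : πp < 1)
    (pp pn pg : X → ℝ)
    (hppm : Measurable pp) (hpnm : Measurable pn) (hpgm : Measurable pg)
    (hpp0 : ∀ x, 0 ≤ pp x) (hpn0 : ∀ x, 0 ≤ pn x) (hpg0 : ∀ x, 0 ≤ pg x)
    (hppint : ∫ x, pp x ∂μ = 1) (hpnint : ∫ x, pn x ∂μ = 1) (hpgint : ∫ x, pg x ∂μ = 1)
    (hae : ∀ᵐ x ∂μ, 0 < pp x ∧ 0 < (1 - πp) * pn x + pg x)
    (pu : X → ℝ) (hpu : pu = fun x => πp * pp x + (1 - πp) * pn x)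
    (Dstar : X → ℝ) (hDstar : Dstar = fun x => πp * pp x / (pu x + pg x))
    (hint1 : Integrable (fun x =>
      pp x * Real.log (pp x / ((pu x + pg x) / 2))) μ)
    (hint2 : Integrable (fun x =>
      (((1 - πp) * pn x + pg x) / (2 - πp)) *
        Real.log ((((1 - πp) * pn x + pg x) / (2 - πp)) / ((pu x + pg x) / 2))) μ) :
    ∫ x, (πp * pp x * Real.log (Dstar x) +
        ((1 - πp) * pn x + pg x) * Real.log (1 - Dstar x)) ∂μ ≥
      -2 * Real.binEntropy (πp / 2) := by
  have i1 : Integrable pp μ := by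
    by_contra h
    simp [integral_undef h] at hppint
  have i2 : Integrable pn μ := by
    by_contra h
    simp [integral_undef h] at hpnint
  have i3 : Integrable pg μ := by
    by_contra h
    simp [integral_undef h] at hpgint
  have hH : 0 ≤ Real.binEntropy (πp / 2) :=
    Real.binEntropy_nonneg (by linarith) (by linarith)
  by_cases hI : Integrable (fun x => πp * pp x * Real.log (Dstar x) +
        ((1 - πp) * pn x + pg x) * Real.log (1 - Dstar x)) μ
  swap
  · rw [integral_undef hI]
    linarith
  have j1 : Integrable (fun x => πp * pp x * Real.log (πp / 2)) μ :=
    (i1.const_mul πp).mul_const _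
  have j2 : Integrable (fun x => (1 - πp) * pn x + pg x) μ := (i2.const_mul _).add i3
  have j3 : Integrable (fun x => ((1 - πp) * pn x + pg x) * Real.log (1 - πp / 2)) μ :=
    j2.mul_const _
  have key : ∫ x, (πp * pp x * Real.log (πp / 2) +
      ((1 - πp) * pn x + pg x) * Real.log (1 - πp / 2)) ∂μ = -2 * Real.binEntropy (πp / 2) := by
    rw [integral_add j1 j3, integral_mul_const, integral_mul_const, integral_const_mul,
      integral_add (i2.const_mul _) i3, integral_const_mul, hppint, hpnint, hpgint,
      Real.binEntropy, Real.log_inv, Real.log_inv]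
    ring
  rw [ge_iff_le, ← key]
  refine integral_mono_ae (j1.add j3) hI ?_
  filter_upwards [hae] with x hx
  obtain ⟨h1, h2⟩ := hx
  have ha : 0 < πp * pp x := mul_pos hπ0 h1
  subst hpu
  subst hDstar
  have hs : 0 < πp * pp x + (1 - πp) * pn x + pg x := by linarith
  have e : 1 - πp * pp x / (πp * pp x + (1 - πp) * pn x + pg x) =
      ((1 - πp) * pn x + pg x) / (πp * pp x + (1 - πp) * pn x + pg x) := by
    rw [eq_div_iff hs.ne', sub_mul, div_mul_cancel₀ _ hs.ne']
    ring
  have t1 := aux_tangent _ _ (πp / 2) ha hs (by linarith)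
  have t2 := aux_tangent _ _ (1 - πp / 2) h2 hs (by linarith)
  simp only [e]
  linarith
end

section
/- Let (X, μ) be a σ-finite measure space and fix a positive class prior π_p ∈ (0,1). Let p_p, p_n, p_g : X → ℝ be nonnegative measurable functions with ∫ p_p dμ = ∫ p_n dμ = ∫ p_g dμ = 1 and with, for μ-a.e. x, p_p(x) > 0 and (1 − π_p)·p_n(x) + p_g(x) > 0. Define p_u := π_p·p_p + (1 − π_p)·p_n and D*(x) := π_p·p_p(x)/(p_u(x) + p_g(x)). Assume the functions x ↦ p_p(x)·log(p_p(x)/((p_u(x)+p_g(x))/2)) and x ↦ (((1 − π_p)·p_n(x) + p_g(x))/(2 − π_p))·log((((1 − π_p)·p_n(x) + p_g(x))/(2 − π_p))/((p_u(x)+p_g(x))/2)) are μ-integrable. Then V(D*) = −2·H(π_p/2) if and only if p_p(x) = (p_u(x) + p_g(x))/2 for μ-a.e. x; moreover, when this holds, D*(x) = π_p/2 for μ-a.e. x. Here V(D*) := ∫_X [π_p·p_p(x)·log(D*(x)) + ((1 − π_p)·p_n(x) + p_g(x))·log(1 − D*(x))] dμ(x). (Global optimum: the minimum −2·H(π_p/2)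 is achieved if and only if p_p = (p_u + p_g)/2, and at that point the discriminator value reaches π_p/2.) -/
open MeasureTheory Real

theorem kl_nonneg_aux {a m : ℝ} (ha : 0 < a) (hm : 0 < m) :
    a - m ≤ a * Real.log (a / m) := by
  have h := Real.log_le_sub_one_of_pos (div_pos hm ha)
  have h2 : Real.log (a / m) = - Real.log (m / a) := by
    rw [← Real.log_inv, inv_div]
  have h3 := mul_le_mul_of_nonneg_left h ha.le
  have h4 : a * (m / a - 1) = m - a := by field_simp
  rw [h2]; linarith

theorem kl_pos_aux {a m : ℝ} (ha : 0 < a) (hm : 0 < m) (hne : a ≠ m) :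
    a - m < a * Real.log (a / m) := by
  have h := Real.log_lt_sub_one_of_pos (div_pos hm ha)
    (fun h => hne ((div_eq_one_iff_eq ha.ne').mp h).symm)
  have h2 : Real.log (a / m) = - Real.log (m / a) := by
    rw [← Real.log_inv, inv_div]
  have h3 := mul_lt_mul_of_pos_left h ha
  have h4 : a * (m / a - 1) = m - a := by field_simp
  rw [h2]; linarith

theorem global_optimum {X : Type*} [MeasurableSpace X] (μ : Measure X) [SigmaFinite μ]
    (πp : ℝ) (hπ0 : 0 < πp) (hπ1 : πp < 1)
    (pp pn pg : X → ℝ)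
    (hppm : Measurable pp) (hpnm : Measurable pn) (hpgm : Measurable pg)
    (hpp0 : ∀ x, 0 ≤ pp x) (hpn0 : ∀ x, 0 ≤ pn x) (hpg0 : ∀ x, 0 ≤ pg x)
    (hppint : ∫ x, pp x ∂μ = 1) (hpnint : ∫ x, pn x ∂μ = 1) (hpgint : ∫ x, pg x ∂μ = 1)
    (hae : ∀ᵐ x ∂μ, 0 < pp x ∧ 0 < (1 - πp) * pn x + pg x)
    (pu : X → ℝ) (hpu : pu = fun x => πp * pp x + (1 - πp) * pn x)
    (Dstar : X → ℝ) (hDstar : Dstar = fun x => πp * pp x / (pu x + pg x))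
    (hint1 : Integrable (fun x =>
      pp x * Real.log (pp x / ((pu x + pg x) / 2))) μ)
    (hint2 : Integrable (fun x =>
      (((1 - πp) * pn x + pg x) / (2 - πp)) *
        Real.log ((((1 - πp) * pn x + pg x) / (2 - πp)) / ((pu x + pg x) / 2))) μ) :
    ((∫ x, (πp * pp x * Real.log (Dstar x) +
        ((1 - πp) * pn x + pg x) * Real.log (1 - Dstar x)) ∂μ =
      -2 * Real.binEntropy (πp / 2)) ↔ (∀ᵐ x ∂μ, pp x = (pu x + pg x) / 2)) ∧
    ((∀ᵐ x ∂μ, pp x = (pu x + pg x) / 2) → (∀ᵐ x ∂μ, Dstar x = πp / 2)) := by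
  subst hpu hDstar
  have h2π : 0 < 2 - πp := by linarith
  have ipp : Integrable pp μ := by
    by_contra h; rw [integral_undef h] at hppint; norm_num at hppint
  have ipn : Integrable pn μ := by
    by_contra h; rw [integral_undef h] at hpnint; norm_num at hpnint
  have ipg : Integrable pg μ := by
    by_contra h; rw [integral_undef h] at hpgint; norm_num at hpgint
  beta_reduce at hint1 hint2 ⊢
  set m : X → ℝ := fun x => (πp * pp x + (1 - πp) * pn x + pg x) / 2 with hm
  set c : X → ℝ := fun x => (1 - πp) * pn x + pg x with hc
  set G : X → ℝ := fun x => πp * (pp x * Real.log (pp x / m x)) +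
    (2 - πp) * ((c x / (2 - πp)) * Real.log ((c x / (2 - πp)) / m x)) with hG
  have iG : Integrable G μ := (hint1.const_mul πp).add (hint2.const_mul (2 - πp))
  have ic : Integrable c μ := (ipn.const_mul _).add ipg
  have vc : ∫ x, c x ∂μ = 2 - πp := by
    rw [hc, integral_add (ipn.const_mul _) ipg, integral_const_mul, hpnint, hpgint]; ring
  have hmc : ∀ x, m x = (πp * pp x + c x) / 2 := fun x => by simp only [hm, hc]; ring
  have hS : ∀ x, πp * pp x + (1 - πp) * pn x + pg x = 2 * m x := fun x => by
    simp only [hm]; ring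
  have hmpos : ∀ x, 0 < pp x → 0 < c x → 0 < m x := fun x h1 h2 => by
    rw [hmc]; positivity
  have hG0 : 0 ≤ᵐ[μ] G := by
    filter_upwards [hae] with x hx
    obtain ⟨h1, h2⟩ := hx
    have h2 : 0 < c x := h2
    have h3 := hmpos x h1 h2
    have k1 := mul_le_mul_of_nonneg_left (kl_nonneg_aux h1 h3) hπ0.le
    have k2 := mul_le_mul_of_nonneg_left (kl_nonneg_aux (div_pos h2 h2π) h3) h2π.le
    have e : (2 - πp) * (c x / (2 - πp)) = c x := by field_simp
    have := hmc x
    simp only [hG, Pi.zero_apply]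
    nlinarith
  have key : ∫ x, (πp * pp x * Real.log (πp * pp x / (πp * pp x + (1 - πp) * pn x + pg x)) +
        ((1 - πp) * pn x + pg x) *
          Real.log (1 - πp * pp x / (πp * pp x + (1 - πp) * pn x + pg x))) ∂μ
      = ∫ x, G x ∂μ + -2 * Real.binEntropy (πp / 2) := by
    have e1 : ∫ x, (πp * pp x * Real.log (πp * pp x / (πp * pp x + (1 - πp) * pn x + pg x)) +
        ((1 - πp) * pn x + pg x) *
          Real.log (1 - πp * pp x / (πp * pp x + (1 - πp) * pn x + pg x))) ∂μ
      = ∫ x, (G x + (πp * Real.log (πp / 2) * pp x + Real.log (1 - πp / 2) * c x)) ∂μ := by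
      apply integral_congr_ae
      filter_upwards [hae] with x hx
      obtain ⟨h1, h2⟩ := hx
      have h2 : 0 < c x := h2
      have h3 := hmpos x h1 h2
      have hcx : (1 - πp) * pn x + pg x = c x := rfl
      rw [hS, hcx]
      have r1 : πp * pp x / (2 * m x) = (πp / 2) * (pp x / m x) := by field_simp
      have r2 : 1 - πp * pp x / (2 * m x) = (1 - πp / 2) * ((c x / (2 - πp)) / m x) := by
        have := hmc x
        have : c x = 2 * m x - πp * pp x := by linarith
        rw [this]; field_simp
      have hq : (0:ℝ) < 1 - πp / 2 := by linarith
      rw [r2, r1, Real.log_mul (by positivity) (by positivity),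
        Real.log_mul hq.ne' (by positivity)]
      simp only [hG]
      field_simp
      ring
    have iL : Integrable (fun x => πp * Real.log (πp / 2) * pp x +
        Real.log (1 - πp / 2) * c x) μ := (ipp.const_mul _).add (ic.const_mul _)
    rw [e1, integral_add iG iL,
      integral_add (ipp.const_mul _) (ic.const_mul _), integral_const_mul, integral_const_mul,
      hppint, vc, Real.binEntropy_eq_negMulLog_add_negMulLog_one_sub, Real.negMulLog,
      Real.negMulLog]
    ring
  refine ⟨?_, ?_⟩
  · rw [key, add_eq_right, integral_eq_zero_iff_of_nonneg_ae hG0 iG]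
    constructor
    · intro h
      filter_upwards [hae, h] with x hx hz
      obtain ⟨h1, h2⟩ := hx
      have h2 : 0 < c x := h2
      have h3 := hmpos x h1 h2
      by_contra hne
      have k1 := mul_lt_mul_of_pos_left (kl_pos_aux h1 h3 hne) hπ0
      have k2 := mul_le_mul_of_nonneg_left (kl_nonneg_aux (div_pos h2 h2π) h3) h2π.le
      have e : (2 - πp) * (c x / (2 - πp)) = c x := by field_simp
      have := hmc x
      simp only [hG, Pi.zero_apply] at hz
      nlinarith
    · intro h
      filter_upwards [hae, h] with x hx hz
      obtain ⟨h1, h2⟩ := hx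
      have h2 : 0 < c x := h2
      have h3 := hmpos x h1 h2
      have hz : pp x = m x := hz
      have e : c x / (2 - πp) = m x := by
        have := hmc x
        rw [div_eq_iff h2π.ne']
        rw [hz] at this
        linarith
      simp only [hG, Pi.zero_apply]
      rw [e, hz, div_self h3.ne']
      simp
  · intro h
    filter_upwards [hae, h] with x hx hz
    have h3 := hmpos x hx.1 hx.2
    have hz : pp x = m x := hz
    rw [hS, hz]
    field_simp
end
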